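/- Let G be a quasi-banana graph with first gonality gon_1(G) = k, and let D be a divisor on G realising the second gonality. Then for every integer l with -1 ≤ l ≤ k, the rank of l·D equals l(l+3)/2. In particular, (k-2)·D is linearly equivalent to the canonical divisor K_G. -/

import Mathlib

open Finset

variable {V : Type*} [Fintype V] [DecidableEq V]

/-- A finite loopless multigraph on vertex type `V`, given by symmetric edge multiplicities. -/
structure Multigraph (V : Type*) [Fintype V] [DecidableEq V] where
  mult : V → V → ℕ
  symm : ∀ u v, mult u v = mult v u
  loopless : ∀ v, mult v v = 0

namespace Multigraph

def Adj (G : Multigraph V) (u v : V) : Prop := 0 < G.mult u v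

/-- A graph is connected. -/
def Connected (G : Multigraph V) : Prop :=
  Nonempty V ∧ ∀ u v : V, Relation.ReflTransGen G.Adj u v

/-- Valence of a vertex. -/
def valence (G : Multigraph V) (v : V) : ℕ := ∑ u, G.mult v u

/-- The Laplacian applied to an integer-valued function on the vertices. -/
def laplacian (G : Multigraph V) (f : V → ℤ) : V → ℤ :=
  fun w => ∑ u, (G.mult w u : ℤ) * (f w - f u)

/-- Degree of a divisor. -/
def degree (D : V → ℤ) : ℤ := ∑ v, D v

/-- A divisor is effective if all coefficients are nonnegative. -/
def Effective (D : V → ℤ) : Prop := ∀ v, 0 ≤ D v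

/-- Linear equivalence of divisors: they differ by a sequence of chip-firing moves,
equivalently by a Laplacian of an integer function. -/
def LinEquiv (G : Multigraph V) (D D' : V → ℤ) : Prop :=
  ∃ f : V → ℤ, D' = D - G.laplacian f

/-- A divisor is winnable if it is linearly equivalent to an effective divisor. -/
def Winnable (G : Multigraph V) (D : V → ℤ) : Prop :=
  ∃ E : V → ℤ, Effective E ∧ G.LinEquiv D E

/-- The Baker–Norine rank of a divisor: the largest `r` such that `D - E` is winnable for
every effective divisor `E` of degree `r` (the defining set contains all negative integers,
and its supremum is `-1` precisely when `D` itself is not winnable). -/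
noncomputable def rank (G : Multigraph V) (D : V → ℤ) : ℤ :=
  sSup {r : ℤ | ∀ E : V → ℤ, Effective E → degree E = r → G.Winnable (fun w => D w - E w)}

/-- The `k`-th gonality of a graph: the smallest degree of a divisor of rank `k`. -/
noncomputable def gonality (G : Multigraph V) (k : ℤ) : ℤ :=
  sInf {d : ℤ | ∃ D : V → ℤ, G.rank D = k ∧ degree D = d}

/-- A graph is gonality-tight if its second gonality exceeds its first by exactly 1. -/
def GonalityTight (G : Multigraph V) : Prop :=
  G.gonality 2 = G.gonality 1 + 1

/-- A divisor realises the `k`-th gonality if it has rank `k` and degree `gon_k(G)`. -/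
def Realises (G : Multigraph V) (k : ℤ) (D : V → ℤ) : Prop :=
  G.rank D = k ∧ degree D = G.gonality k

/-- A divisor is `v`-reduced: nonnegative away from `v`, and set-firing any nonempty set of
vertices not containing `v` creates a negative coefficient inside the set. -/
def Reduced (G : Multigraph V) (v : V) (D : V → ℤ) : Prop :=
  (∀ w, w ≠ v → 0 ≤ D w) ∧
    ∀ U : Finset V, U.Nonempty → v ∉ U →
      ∃ w ∈ U, D w - ∑ u ∈ Uᶜ, (G.mult w u : ℤ) < 0

/-- The genus (first Betti number) of a graph: `|E| - |V| + 1`. -/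
def genus (G : Multigraph V) : ℤ :=
  ((∑ u, ∑ v, G.mult u v : ℕ) : ℤ) / 2 - Fintype.card V + 1

/-- The canonical divisor of a graph. -/
def canonical (G : Multigraph V) : V → ℤ :=
  fun w => (G.valence w : ℤ) - 2

/-- The subgraph induced on a set `S` of vertices (with all edges among `S`). -/
def induce (G : Multigraph V) (S : Finset V) : Multigraph {x // x ∈ S} where
  mult a b := G.mult a b
  symm a b := G.symm a b
  loopless a := G.loopless a

/-- `G.SeparatedBy u w v` means every path from `w` to `v` passes through `u`. -/
def SeparatedBy (G : Multigraph V) (u w v : V) : Prop :=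
  ¬ Relation.ReflTransGen (fun x y => G.Adj x y ∧ x ≠ u ∧ y ≠ u) w v

end Multigraph

/-- Size of the `i`-th level of a quasi-banana graph: level `0` has a single vertex. -/
def qbSize (q : ℕ → ℕ) (i : ℕ) : ℕ := if i = 0 then 1 else q i

/-- `ℓ` is a quasi-banana labelling of `G` exhibiting `G ≅ QB_m(q_1, …, q_m)`:
`ℓ` is a bijection onto the pairs `(i, j)` with `i ≤ m`, `1 ≤ j ≤ qbSize q i`
(vertex `u_{i,j}` is the vertex labelled `(i,j)`), and the edge multiplicities are:
one edge between distinct vertices of the same level, `(∑_{k=1}^{i} q_k) + 2` edges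
between `u_{i,1}` and each `u_{i+1,j}`, and no other edges. -/
def Multigraph.IsQBLabelling (G : Multigraph V) (m : ℕ) (q : ℕ → ℕ) (ℓ : V → ℕ × ℕ) : Prop :=
  (∀ i, 1 ≤ i → i ≤ m → 0 < q i) ∧
  Function.Injective ℓ ∧
  (∀ v : V, (ℓ v).1 ≤ m ∧ 1 ≤ (ℓ v).2 ∧ (ℓ v).2 ≤ qbSize q (ℓ v).1) ∧
  (∀ i j : ℕ, i ≤ m → 1 ≤ j → j ≤ qbSize q i → ∃ v, ℓ v = (i, j)) ∧
  (∀ v w : V, v ≠ w → G.mult v w =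
    if (ℓ v).1 = (ℓ w).1 then 1
    else if (ℓ v).1 + 1 = (ℓ w).1 ∧ (ℓ v).2 = 1 then (∑ i ∈ Finset.Icc 1 (ℓ v).1, q i) + 2
    else if (ℓ w).1 + 1 = (ℓ v).1 ∧ (ℓ w).2 = 1 then (∑ i ∈ Finset.Icc 1 (ℓ w).1, q i) + 2
    else 0)

/-- A graph is a quasi-banana graph if it is isomorphic to some `QB_m(N)`. -/
def Multigraph.IsQuasiBanana (G : Multigraph V) : Prop :=
  ∃ (m : ℕ) (q : ℕ → ℕ) (ℓ : V → ℕ × ℕ), G.IsQBLabelling m q ℓ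

/-- The graph obtained from `G'` by attaching a complete graph `K_n`: `n` new vertices
pairwise joined by exactly one edge, each joined to `v` by exactly `k+1` edges. -/
def attachComplete (G' : Multigraph V) (v : V) (k n : ℕ) : Multigraph (V ⊕ Fin n) where
  mult x y :=
    match x, y with
    | Sum.inl a, Sum.inl b => G'.mult a b
    | Sum.inl a, Sum.inr _ => if a = v then k + 1 else 0
    | Sum.inr _, Sum.inl b => if b = v then k + 1 else 0
    | Sum.inr i, Sum.inr j => if i = j then 0 else 1
  symm := by
    rintro (a | i) (b | j)
    · exact G'.symm a b
    · rfl
    · rfl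
    · by_cases h : i = j
      · simp [h]
      · simp [h, Ne.symm h]
  loopless := by
    rintro (a | i)
    · exact G'.loopless a
    · simp

/-!
A quasi-banana graph grows from a point by attaching complete graphs: if `n` vertices are present,
each vertex of the next clique gets `n + 1` edges to the current base vertex `v`, and one of the
new vertices becomes the base. Firing the clique reduces the part of a divisor on the new vertices
to a parking function, whose degree is bounded, which makes induction over the cliques work.

The divisor `(n + 1) v` has `r(l (n + 1) v) = l (l + 3) / 2` for `0 ≤ l ≤ n`. It is equivalent to
one chip on every vertex and a second one on the first vertex `s`, and in the order of attachment
the vertices other than `s` have indegrees `2, 3, …, n`; Dhar's criterion for this orientation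
gives the upper bound. For the lower bound, `E` is subtracted from `l (n + 1) v` and the clique is
reduced: either a new vertex carries more than `l` chips of `E` and `l` decreases, or the clique
part is so small that the degree left on the old graph is at least its genus.

A divisor of rank `2` and degree `n + 1` is equivalent to `(n + 1) v`, unless its clique part
vanishes somewhere. Then all vertices of the old graph are equivalent, which forces `n = 2`, and
the divisor agrees with `3 v` after doubling. For odd `l` nothing needs to be compared:
`l = -1` gives negative degree, and `l = 1` is the hypothesis on the divisor.
-/

namespace Multigraph

section Divisors

variable {ι : Type*}

lemma effective_single [DecidableEq ι] (x : ι) {c : ℤ} (hc : 0 ≤ c) : Effective (Pi.single x c) :=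
  show (0 : ι → ℤ) ≤ Pi.single x c from Pi.single_nonneg.2 hc

lemma Effective.sub_single [DecidableEq ι] {E : ι → ℤ} (hE : Effective E) {x : ι} {c : ℤ}
    (hc : c ≤ E x) : Effective (E - Pi.single x c) := fun w => by
  obtain rfl | hw := eq_or_ne w x
  · simpa using hc
  · simpa [hw] using hE w

lemma Effective.add {A B : ι → ℤ} (hA : Effective A) (hB : Effective B) : Effective (A + B) :=
  fun w => add_nonneg (hA w) (hB w)

variable [Fintype ι]

lemma degree_add (A B : ι → ℤ) : degree (A + B) = degree A + degree B :=
  Finset.sum_add_distrib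

lemma degree_sub (A B : ι → ℤ) : degree (A - B) = degree A - degree B :=
  Finset.sum_sub_distrib _ _

lemma degree_zsmul (c : ℤ) (A : ι → ℤ) : degree (c • A) = c * degree A :=
  (Finset.mul_sum ..).symm

lemma degree_single [DecidableEq ι] (x : ι) (c : ℤ) : degree (Pi.single x c) = c := by
  simp [degree]

lemma degree_sumElim {κ : Type*} [Fintype κ] (A : ι → ℤ) (r : κ → ℤ) :
    degree (Sum.elim A r) = degree A + degree r := by
  simp [degree]

lemma degree_mono {A B : ι → ℤ} (h : A ≤ B) : degree A ≤ degree B :=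
  Finset.sum_le_sum fun w _ => h w

lemma degree_comp {κ : Type*} [Fintype κ] (A : ι → ℤ) (e : κ ≃ ι) : degree (A ∘ e) = degree A :=
  e.sum_comp A

lemma Effective.degree_nonneg {E : ι → ℤ} (hE : Effective E) : 0 ≤ degree E :=
  Finset.sum_nonneg fun w _ => hE w

lemma Effective.eq_zero_of_degree_nonpos {E : ι → ℤ} (hE : Effective E) (hd : degree E ≤ 0) :
    E = 0 :=
  funext fun w => (Finset.sum_eq_zero_iff_of_nonneg fun w _ => hE w).1
    (le_antisymm hd hE.degree_nonneg) w (mem_univ w)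

end Divisors

section LinEquiv

variable {G : Multigraph V} {A B C D : V → ℤ}

lemma laplacian_add (G : Multigraph V) (f g : V → ℤ) :
    G.laplacian (f + g) = G.laplacian f + G.laplacian g := by
  funext w
  simp only [laplacian, Pi.add_apply, ← Finset.sum_add_distrib]
  exact Finset.sum_congr rfl fun u _ => by ring

lemma laplacian_zsmul (G : Multigraph V) (c : ℤ) (f : V → ℤ) :
    G.laplacian (c • f) = c • G.laplacian f := by
  funext w
  simp only [laplacian, Pi.smul_apply, smul_eq_mul, Finset.mul_sum]
  exact Finset.sum_congr rfl fun u _ => by ring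

lemma degree_laplacian (G : Multigraph V) (f : V → ℤ) : degree (G.laplacian f) = 0 := by
  have antisymm : degree (G.laplacian f) = - degree (G.laplacian f) := by
    simp only [degree, laplacian, ← Finset.sum_neg_distrib]
    rw [Finset.sum_comm]
    refine Finset.sum_congr rfl fun u _ => Finset.sum_congr rfl fun w _ => ?_
    rw [G.symm]
    ring
  linarith

lemma LinEquiv.refl (A : V → ℤ) : G.LinEquiv A A :=
  ⟨0, by simp [show G.laplacian 0 = 0 by funext; simp [laplacian]]⟩

lemma LinEquiv.of_eq (h : A = B) : G.LinEquiv A B := h ▸ .refl A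

lemma LinEquiv.add (h : G.LinEquiv A B) (h' : G.LinEquiv C D) : G.LinEquiv (A + C) (B + D) := by
  obtain ⟨f, rfl⟩ := h
  obtain ⟨g, rfl⟩ := h'
  exact ⟨f + g, by rw [laplacian_add]; abel⟩

lemma LinEquiv.zsmul (c : ℤ) (h : G.LinEquiv A B) : G.LinEquiv (c • A) (c • B) := by
  obtain ⟨f, rfl⟩ := h
  exact ⟨c • f, by rw [laplacian_zsmul, smul_sub]⟩

lemma LinEquiv.symm (h : G.LinEquiv A B) : G.LinEquiv B A := by
  obtain ⟨f, rfl⟩ := h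
  exact ⟨(-1 : ℤ) • f, by rw [laplacian_zsmul]; simp⟩

lemma LinEquiv.trans (h : G.LinEquiv A B) (h' : G.LinEquiv B C) : G.LinEquiv A C := by
  obtain ⟨f, rfl⟩ := h
  obtain ⟨g, rfl⟩ := h'
  exact ⟨f + g, by rw [laplacian_add]; abel⟩

lemma LinEquiv.sub_right (h : G.LinEquiv A B) (C : V → ℤ) : G.LinEquiv (A - C) (B - C) := by
  simpa only [sub_eq_add_neg] using h.add (.refl (-C))

lemma LinEquiv.degree_eq (h : G.LinEquiv A B) : degree A = degree B := by
  obtain ⟨f, rfl⟩ := h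
  rw [degree_sub, degree_laplacian, sub_zero]

lemma winnable_iff : G.Winnable A ↔ ∃ f : V → ℤ, G.laplacian f ≤ A :=
  ⟨fun ⟨_, hE, f, hf⟩ => ⟨f, sub_nonneg.1 (hf ▸ hE : 0 ≤ A - G.laplacian f)⟩,
    fun ⟨f, hf⟩ => ⟨_, sub_nonneg.2 hf, f, rfl⟩⟩

lemma Effective.winnable (h : Effective A) : G.Winnable A := ⟨A, h, .refl A⟩

lemma LinEquiv.winnable (h : G.LinEquiv A B) (hA : G.Winnable A) : G.Winnable B :=
  let ⟨E, hE, hAE⟩ := hA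
  ⟨E, hE, h.symm.trans hAE⟩

lemma Winnable.mono (hA : G.Winnable A) (h : A ≤ B) : G.Winnable B :=
  let ⟨f, hf⟩ := winnable_iff.1 hA
  winnable_iff.2 ⟨f, hf.trans h⟩

lemma Winnable.degree_nonneg (hA : G.Winnable A) : 0 ≤ degree A :=
  let ⟨_, hE, hAE⟩ := hA
  hAE.degree_eq ▸ hE.degree_nonneg

lemma Winnable.linEquiv_of_degree_le (h : G.Winnable (A - B)) (hd : degree A ≤ degree B) :
    G.LinEquiv A B := by
  obtain ⟨E, hE, hAE⟩ := h
  have degree_le : degree E ≤ 0 := by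
    rw [← hAE.degree_eq, degree_sub]
    exact sub_nonpos.2 hd
  rw [hE.eq_zero_of_degree_nonpos degree_le] at hAE
  simpa using hAE.add (.refl B)

/- The order orients the edges acyclically, and the bound is the indegree: a firing script is
maximal on a set whose first vertex loses at least its indegree. -/
lemma not_winnable_of_lt_indegree [Nonempty V] {α : Type*} [LinearOrder α] (o : V → α)
    (h : ∀ w, A w < ∑ u with o u < o w, (G.mult w u : ℤ)) : ¬ G.Winnable A := by
  rw [winnable_iff]
  rintro ⟨f, hf⟩
  obtain ⟨x, -, hx⟩ := Finset.exists_max_image univ f Finset.univ_nonempty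
  obtain ⟨w, hw, hwmin⟩ := Finset.exists_min_image (univ.filter fun u => f u = f x) o ⟨x, by simp⟩
  simp only [mem_filter, mem_univ, true_and] at hw hwmin
  have indegree_le : ∑ u with o u < o w, (G.mult w u : ℤ) ≤ G.laplacian f w := by
    rw [Finset.sum_filter]
    refine Finset.sum_le_sum fun u _ => ?_
    have hu : f u ≤ f w := hw ▸ hx u (mem_univ u)
    split_ifs with hlt
    · have : f u ≠ f w := fun he => hlt.not_ge (hwmin u (he.trans hw))
      exact le_mul_of_one_le_right (by positivity) (by omega)
    · exact mul_nonneg (by positivity) (by omega)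
  exact (h w).not_ge (indegree_le.trans (hf w))

end LinEquiv

section Rank

variable {G : Multigraph V} {A B E : V → ℤ} {r : ℤ}

lemma gonality_eq (hA : G.rank A = r)
    (hmin : ∀ B : V → ℤ, G.rank B = r → degree A ≤ degree B) : G.gonality r = degree A :=
  IsLeast.csInf_eq ⟨⟨A, hA, rfl⟩, by rintro _ ⟨B, hB, rfl⟩; exact hmin B hB⟩

variable [Nonempty V]

private lemma winnable_sub_of_le {s : ℤ} (hrs : r ≤ s)
    (h : ∀ E : V → ℤ, Effective E → degree E = s → G.Winnable (A - E))
    (hE : Effective E) (hd : degree E = r) : G.Winnable (A - E) := by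
  obtain ⟨x⟩ := ‹Nonempty V›
  have hx := effective_single x (sub_nonneg.2 hrs)
  refine (h (E + Pi.single x (s - r)) (hE.add hx) ?_).mono ?_
  · rw [degree_add, degree_single, hd, add_sub_cancel]
  · exact sub_le_sub_left (le_add_of_nonneg_right hx) A

lemma le_rank_iff : r ≤ G.rank A ↔
    ∀ E : V → ℤ, Effective E → degree E = r → G.Winnable (A - E) := by
  set S := {r : ℤ | ∀ E : V → ℤ, Effective E → degree E = r → G.Winnable (A - E)}
  have nonempty : S.Nonempty :=
    ⟨-1, fun E hE hd => absurd (hd ▸ hE.degree_nonneg) (by norm_num)⟩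
  have bdd : BddAbove S := by
    refine ⟨max 0 (degree A), fun s hs => ?_⟩
    by_contra! hlt
    obtain ⟨hs0, hsA⟩ := max_lt_iff.1 hlt
    obtain ⟨x⟩ := ‹Nonempty V›
    have := (hs _ (effective_single x hs0.le) (degree_single x s)).degree_nonneg
    rw [degree_sub, degree_single] at this
    omega
  change r ≤ sSup S ↔ r ∈ S
  exact ⟨fun h _ hE hd => winnable_sub_of_le h (Int.csSup_mem nonempty bdd) hE hd,
    fun h => le_csSup bdd h⟩

lemma winnable_sub_of_degree_le_rank (hE : Effective E) (h : degree E ≤ G.rank A) :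
    G.Winnable (A - E) :=
  le_rank_iff.1 h E hE rfl

lemma sub_degree_le_rank_sub (hE : Effective E) : G.rank A - degree E ≤ G.rank (A - E) := by
  refine le_rank_iff.2 fun F hF hd => ?_
  rw [sub_sub]
  exact winnable_sub_of_degree_le_rank (hE.add hF) (by rw [degree_add, hd]; omega)

lemma one_le_rank_single {v : V} (h : ∀ x, G.LinEquiv (Pi.single v 1) (Pi.single x 1)) :
    1 ≤ G.rank (Pi.single v 1) := by
  refine le_rank_iff.2 fun E hE hd => ?_
  obtain ⟨x, hx⟩ : ∃ x, 1 ≤ E x := by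
    by_contra! hlt
    have := degree_mono (B := 0) fun x => Int.lt_add_one_iff.1 (hlt x)
    rw [hd] at this
    simp [degree] at this
  have rest_eq_zero := (hE.sub_single hx).eq_zero_of_degree_nonpos (by
    rw [degree_sub, degree_single, hd, sub_self])
  rw [sub_eq_zero.1 rest_eq_zero]
  refine ((h x).sub_right _).symm.winnable (Effective.winnable fun w => ?_)
  simp

lemma rank_eq_neg_one_of_degree_neg (h : degree A < 0) : G.rank A = -1 := by
  refine le_antisymm (Int.lt_add_one_iff.1 ?_) (le_rank_iff.2 fun E hE hd => ?_)
  · by_contra! h0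
    have zero_effective : Effective (0 : V → ℤ) := fun _ => le_rfl
    have := winnable_sub_of_degree_le_rank zero_effective (by simpa [degree] using h0)
    exact h.not_ge (sub_zero A ▸ this).degree_nonneg
  · exact absurd (hd ▸ hE.degree_nonneg) (by norm_num)

lemma LinEquiv.rank_eq (h : G.LinEquiv A B) : G.rank A = G.rank B :=
  eq_of_forall_le_iff fun _ => by
    simp only [le_rank_iff]
    exact forall₃_congr fun E _ _ =>
      ⟨(h.sub_right E).winnable, (h.symm.sub_right E).winnable⟩

end Rank

section Comap

variable {W : Type*} [Fintype W] [DecidableEq W]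

/-- The multigraph on `W` whose edges between `a` and `b` are the edges of `G` between `φ a` and
`φ b`: an induced subgraph for injective `φ`, an isomorphic copy of `G` for bijective `φ`. -/
def comap (G : Multigraph V) (φ : W → V) : Multigraph W where
  mult a b := G.mult (φ a) (φ b)
  symm a b := G.symm (φ a) (φ b)
  loopless a := G.loopless (φ a)

variable (G : Multigraph V) (e : W ≃ V)

lemma laplacian_comap (f : V → ℤ) : (G.comap e).laplacian (f ∘ e) = G.laplacian f ∘ e :=
  funext fun w => e.sum_comp fun u => (G.mult (e w) u : ℤ) * (f (e w) - f u)

lemma canonical_comap : (G.comap e).canonical = G.canonical ∘ e :=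
  funext fun w => congrArg (fun n : ℕ => (n : ℤ) - 2) (e.sum_comp fun u => G.mult (e w) u)

variable {G e}

lemma linEquiv_comap {A B : V → ℤ} : (G.comap e).LinEquiv (A ∘ e) (B ∘ e) ↔ G.LinEquiv A B := by
  refine (e.arrowCongr (Equiv.refl ℤ)).exists_congr_left.trans (exists_congr fun f => ?_)
  change B ∘ e = A ∘ e - (G.comap e).laplacian (f ∘ e) ↔ _
  rw [laplacian_comap]
  exact e.surjective.injective_comp_right.eq_iff (b := A - G.laplacian f)

lemma winnable_comap {A : V → ℤ} : (G.comap e).Winnable (A ∘ e) ↔ G.Winnable A := by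
  refine (e.arrowCongr (Equiv.refl ℤ)).exists_congr_left.trans (exists_congr fun E => ?_)
  change Effective (E ∘ e) ∧ (G.comap e).LinEquiv (A ∘ e) (E ∘ e) ↔ _
  rw [linEquiv_comap]
  exact and_congr_left' (e.forall_congr_right (q := fun v => 0 ≤ E v))

lemma rank_comap (A : V → ℤ) : (G.comap e).rank (A ∘ e) = G.rank A := by
  refine congrArg sSup (Set.ext fun r => ?_)
  refine (e.arrowCongr (Equiv.refl ℤ)).forall_congr_left.trans (forall_congr' fun E => ?_)
  change (Effective (E ∘ e) → degree (E ∘ e) = r → (G.comap e).Winnable ((A - E) ∘ e)) ↔ _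
  rw [degree_comp, winnable_comap]
  exact imp_congr_left (e.forall_congr_right (q := fun v => 0 ≤ E v))

lemma gonality_comap (k : ℤ) : (G.comap e).gonality k = G.gonality k := by
  refine congrArg sInf (Set.ext fun d => ?_)
  refine (e.arrowCongr (Equiv.refl ℤ)).exists_congr_left.trans (exists_congr fun A => ?_)
  change (G.comap e).rank (A ∘ e) = k ∧ degree (A ∘ e) = d ↔ _
  rw [rank_comap, degree_comp]

end Comap

section AttachComplete

variable {G : Multigraph V} {v : V} {k q : ℕ} {A B : V → ℤ} {r g : Fin q → ℤ}

/-- The chips leaving the new vertices of `attachComplete G v k q` when the script `g` is fired on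
them: the Laplacian of `K_q`, plus `k + 1` edges from each of its vertices to a sink. -/
def cliqueLaplacian (k : ℕ) (g : Fin q → ℤ) : Fin q → ℤ :=
  fun j => (k + 1 + q) * g j - degree g

lemma cliqueLaplacian_add (g h : Fin q → ℤ) :
    cliqueLaplacian k (g + h) = cliqueLaplacian k g + cliqueLaplacian k h := by
  funext j
  simp only [cliqueLaplacian, degree_add, Pi.add_apply]
  ring

lemma cliqueLaplacian_neg (g : Fin q → ℤ) : cliqueLaplacian k (-g) = -cliqueLaplacian k g := by
  funext j
  simp only [cliqueLaplacian, degree, Pi.neg_apply, Finset.sum_neg_distrib]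
  ring

lemma degree_cliqueLaplacian (g : Fin q → ℤ) :
    degree (cliqueLaplacian k g) = (k + 1) * degree g := by
  simp only [cliqueLaplacian, degree, Finset.sum_sub_distrib, ← Finset.mul_sum, Finset.sum_const,
    card_univ, Fintype.card_fin, nsmul_eq_mul]
  ring

lemma laplacian_attachComplete (f : V → ℤ) (g : Fin q → ℤ) :
    (attachComplete G v k q).laplacian (Sum.elim f fun j => f v + g j) =
      Sum.elim (G.laplacian f - Pi.single v ((k + 1) * degree g)) (cliqueLaplacian k g) := by
  funext w
  rcases w with a | j
  · obtain rfl | ha := eq_or_ne a v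
    · simp [laplacian, attachComplete, degree, Finset.mul_sum, sub_eq_add_neg]
    · simp [laplacian, attachComplete, ha]
  · have clique_part : ∑ i, (if j = i then 0 else g j - g i) = q * g j - degree g := by
      have : ∀ i, (if j = i then 0 else g j - g i) = g j - g i := by
        intro i
        split_ifs with hij <;> simp [hij]
      simp [this, degree]
    simp only [laplacian, attachComplete, Sum.elim_inr, Fintype.sum_sum_type, Nat.cast_ite,
      Nat.cast_add, Nat.cast_one, Nat.cast_zero, Sum.elim_inl, ite_mul, zero_mul, sum_ite_eq',
      mem_univ, ↓reduceIte, add_sub_cancel_left, add_sub_add_left_eq_sub, one_mul, clique_part,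
      cliqueLaplacian]
    ring

lemma winnable_attachComplete_iff :
    (attachComplete G v k q).Winnable (Sum.elim A r) ↔
      ∃ g, cliqueLaplacian k g ≤ r ∧ G.Winnable (A + Pi.single v ((k + 1) * degree g)) := by
  constructor
  · rw [winnable_iff]
    rintro ⟨f, hf⟩
    have relative : f = Sum.elim (f ∘ Sum.inl)
        fun j => (f ∘ Sum.inl) v + (f (Sum.inr j) - f (Sum.inl v)) := by
      funext w
      rcases w with a | j <;> simp
    rw [relative, laplacian_attachComplete, Sum.elim_le_elim_iff] at hf
    exact ⟨_, hf.2, winnable_iff.2 ⟨_, sub_le_iff_le_add.1 hf.1⟩⟩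
  · rintro ⟨g, hg, hA⟩
    obtain ⟨f, hf⟩ := winnable_iff.1 hA
    refine winnable_iff.2 ⟨_, (laplacian_attachComplete f g).trans_le ?_⟩
    exact Sum.elim_le_elim_iff.2 ⟨sub_le_iff_le_add.2 hf, hg⟩

lemma LinEquiv.sumElim (hAB : G.LinEquiv A B) (v : V) (k : ℕ) (r : Fin q → ℤ) :
    (attachComplete G v k q).LinEquiv (Sum.elim A r) (Sum.elim B r) := by
  obtain ⟨f, rfl⟩ := hAB
  refine ⟨Sum.elim f fun _ => f v + 0, ?_⟩
  rw [laplacian_attachComplete f fun _ => 0]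
  funext w
  rcases w with a | j <;> simp [cliqueLaplacian, degree]

lemma linEquiv_attachComplete_fire (A : V → ℤ) (r g : Fin q → ℤ) :
    (attachComplete G v k q).LinEquiv (Sum.elim A r)
      (Sum.elim (A + Pi.single v ((k + 1) * degree g)) (r - cliqueLaplacian k g)) := by
  refine ⟨Sum.elim 0 fun j => (0 : V → ℤ) v + g j, ?_⟩
  rw [laplacian_attachComplete]
  funext w
  rcases w with a | j <;> simp [laplacian]

lemma linEquiv_single_inr (j : Fin q) :
    (attachComplete G v k q).LinEquiv (Pi.single (Sum.inr j) (k + q + 1 : ℤ))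
      (Sum.elim (Pi.single v (k + 1 : ℤ)) 1) := by
  have fire_j := linEquiv_attachComplete_fire (G := G) (v := v) (k := k) 0
    (Pi.single j (k + q + 1 : ℤ)) (Pi.single j 1)
  rw [degree_single, mul_one, zero_add, Sum.elim_zero_single] at fire_j
  convert fire_j using 2
  funext i
  obtain rfl | hij := eq_or_ne i j
  · simp only [Pi.one_apply, Pi.sub_apply, Pi.single_eq_same, cliqueLaplacian, mul_one,
      degree_single]
    ring
  · simp [cliqueLaplacian, degree_single, hij]

lemma canonical_attachComplete :
    (attachComplete G v k q).canonical =
      Sum.elim (G.canonical + Pi.single v (q * (k + 1) : ℤ)) fun _ => (k + q - 2 : ℤ) := by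
  funext w
  rcases w with a | j
  · obtain rfl | ha := eq_or_ne a v
    · simp only [canonical, valence, attachComplete, Fintype.sum_sum_type, ↓reduceIte, sum_const,
        card_univ, Fintype.card_fin, smul_eq_mul, Nat.cast_add, Nat.cast_sum, Nat.cast_mul,
        Nat.cast_one, Sum.elim_inl, Pi.add_apply, Pi.single_eq_same]
      ring
    · simp [canonical, valence, attachComplete, ha]
  · have clique_part : ∑ i, (if j = i then 0 else 1 : ℤ) = q - 1 := by
      have : ∀ i, (if j = i then 0 else 1 : ℤ) = 1 - if j = i then 1 else 0 := by
        intro i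
        split_ifs <;> rfl
      simp [this]
    simp [canonical, valence, attachComplete, clique_part]

/-- The part of a divisor on `attachComplete G v k q` carried by the new vertices is reduced with
respect to `v`: it is effective, and no script that leaves it effective sends chips to `v`. -/
structure CliqueReduced (k : ℕ) (r : Fin q → ℤ) : Prop where
  effective : Effective r
  degree_nonpos : ∀ g, cliqueLaplacian k g ≤ r → degree g ≤ 0

lemma exists_cliqueReduced (k : ℕ) (r : Fin q → ℤ) :
    ∃ g, CliqueReduced k (r - cliqueLaplacian k g) := by
  have bdd : ∀ s, (∃ g, cliqueLaplacian k g ≤ r ∧ degree g = s) → s ≤ |degree r| := by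
    rintro s ⟨g, hg, rfl⟩
    have := degree_cliqueLaplacian (k := k) g ▸ degree_mono hg
    nlinarith [le_abs_self (degree r), abs_nonneg (degree r)]
  have feasible : ∃ s g, cliqueLaplacian k g ≤ r ∧ degree g = s := by
    refine ⟨_, fun _ => -∑ i, |r i|, fun j => ?_, rfl⟩
    have := Finset.single_le_sum (fun i _ => abs_nonneg (r i)) (mem_univ j)
    simp only [cliqueLaplacian, degree, Finset.sum_const, card_univ, Fintype.card_fin, nsmul_eq_mul]
    nlinarith [neg_abs_le (r j), abs_nonneg (r j)]
  obtain ⟨_, ⟨g, hg, rfl⟩, hmax⟩ := Int.exists_greatest_of_bdd ⟨_, bdd⟩ feasible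
  refine ⟨g, fun j => sub_nonneg.2 (hg j), fun h hh => ?_⟩
  have := hmax _ ⟨g + h, by rwa [cliqueLaplacian_add, add_comm, ← le_sub_iff_add_le], rfl⟩
  rw [degree_add] at this
  omega

lemma exists_linEquiv_cliqueReduced (G : Multigraph V) (v : V) (k : ℕ) (A : V ⊕ Fin q → ℤ) :
    ∃ B r, CliqueReduced k r ∧ (attachComplete G v k q).LinEquiv A (Sum.elim B r) := by
  obtain ⟨g, hr⟩ := exists_cliqueReduced k (A ∘ Sum.inr)
  have fire := linEquiv_attachComplete_fire (G := G) (v := v) (k := k)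
    (A ∘ Sum.inl) (A ∘ Sum.inr) g
  rw [Sum.elim_comp_inl_inr] at fire
  exact ⟨_, _, hr, fire⟩

namespace CliqueReduced

lemma nonpos (hr : CliqueReduced k r) (hg : cliqueLaplacian k g ≤ r) : g ≤ 0 := by
  have effective : Effective fun j => max (g j) 0 := fun j => le_max_right _ _
  have degree_le : degree g ≤ degree fun j => max (g j) 0 := degree_mono fun j => le_max_left _ _
  have feasible : cliqueLaplacian k (fun j => max (g j) 0) ≤ r := by
    intro j
    have hgj := hg j
    have hrj := hr.effective j
    simp only [cliqueLaplacian] at hgj ⊢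
    rcases max_cases (g j) 0 with ⟨h, -⟩ | ⟨h, -⟩ <;> rw [h]
    · linarith
    · linarith [effective.degree_nonneg]
  have eq_zero := effective.eq_zero_of_degree_nonpos (hr.degree_nonpos _ feasible)
  exact fun j => max_eq_right_iff.1 (congrFun eq_zero j)

lemma exists_mem_add_card_le (hr : CliqueReduced k r) {T : Finset (Fin q)} (hT : T.Nonempty) :
    ∃ j ∈ T, r j + #T ≤ k + q := by
  by_contra! hlt
  have degree_eq : degree (fun j => if j ∈ T then 1 else 0 : Fin q → ℤ) = #T := by
    simp [degree]
  refine hT.card_pos.not_ge (Int.ofNat_le.1 (degree_eq ▸ hr.degree_nonpos _ fun j => ?_))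
  rw [cliqueLaplacian, degree_eq]
  have := hr.effective j
  split_ifs with hj
  · linarith [hlt j hj]
  · linarith [(#T).cast_nonneg (α := ℤ)]

end CliqueReduced

end AttachComplete

section DegreeBound

lemma sum_eq_sum_card_le_add {ι : Type*} [Fintype ι] {r : ι → ℕ} {m : ℕ} (hr : ∀ j, r j ≤ m) :
    ∑ j, r j = ∑ b ∈ range m, #{j | m ≤ r j + b} := by
  simp only [Finset.card_filter]
  rw [Finset.sum_comm]
  refine Finset.sum_congr rfl fun j _ => ?_
  have slice : {b ∈ range m | m ≤ r j + b} = Finset.Ico (m - r j) m := by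
    ext b
    simp only [mem_filter, mem_range, mem_Ico]
    omega
  rw [← Finset.card_filter, slice, Nat.card_Ico, Nat.sub_sub_self (hr j)]

lemma sum_range_min (k q : ℕ) :
    ∑ b ∈ range (q + k), min q b = k * q + ∑ i ∈ range q, i := by
  rw [Finset.sum_range_add, add_comm, Finset.sum_congr rfl fun i _ => min_eq_left (by omega),
    Finset.sum_const, card_range, smul_eq_mul]
  exact congrArg _ (Finset.sum_congr rfl fun i hi => min_eq_right (mem_range.1 hi).le)

lemma sum_range_le_sum_range_tsub {c p n : ℕ} (hcp : c ≤ p) (hpn : p ≤ n) :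
    ∑ i ∈ range c, i ≤ ∑ b ∈ range n, if b < p then b + c - p else 0 := calc
  ∑ i ∈ range c, i = ∑ i ∈ range c, if p - c + i < p then p - c + i + c - p else 0 :=
    Finset.sum_congr rfl fun i hi => by
      have := mem_range.1 hi
      split_ifs <;> omega
  _ ≤ ∑ b ∈ range (p - c + c), if b < p then b + c - p else 0 := by
    rw [Finset.sum_range_add]
    exact Nat.le_add_left _ _
  _ ≤ ∑ b ∈ range n, if b < p then b + c - p else 0 :=
    Finset.sum_le_sum_of_subset (range_subset_range.2 (by omega))

/- Reduced divisors are parking functions, so at most `min q b` new vertices miss at most `b` of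
the `k + q` chips. A sparse level set `{j | u < r j}` improves this for `p - c < b < p`. -/
lemma sum_add_sum_range_le {k q u p c : ℕ} {r : Fin q → ℕ}
    (parking : ∀ T : Finset (Fin q), T.Nonempty → ∃ j ∈ T, r j + #T ≤ k + q)
    (hup : u + p = k + q) (hpq : p ≤ q + 1) (hc : #{j | u < r j} + c ≤ p) :
    ∑ j, r j + ∑ i ∈ range c, i ≤ k * q + ∑ i ∈ range q, i := by
  have le_max : ∀ j, r j ≤ q + k := fun j => by
    obtain ⟨i, hi, hle⟩ := parking {j} (singleton_nonempty j)
    rw [mem_singleton.1 hi] at hle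
    omega
  have card_le : ∀ b, #{j | q + k ≤ r j + b} ≤ min q b := fun b => by
    refine le_min (card_finset_fin_le _) ?_
    obtain hT | hT := Finset.eq_empty_or_nonempty {j | q + k ≤ r j + b}
    · exact (card_eq_zero.2 hT).trans_le b.zero_le
    · obtain ⟨j, hj, hle⟩ := parking _ hT
      have := (mem_filter.1 hj).2
      omega
  have card_le_sub : ∀ b < p, #{j | q + k ≤ r j + b} ≤ p - c := fun b hb => by
    refine (card_le_card fun j hj => ?_).trans (Nat.le_sub_of_add_le hc)
    simp only [mem_filter, mem_univ, true_and] at hj ⊢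
    omega
  calc ∑ j, r j + ∑ i ∈ range c, i
    _ ≤ ∑ b ∈ range (q + k), (#{j | q + k ≤ r j + b} + if b < p then b + c - p else 0) := by
      rw [sum_eq_sum_card_le_add le_max, Finset.sum_add_distrib]
      exact Nat.add_le_add_left (sum_range_le_sum_range_tsub (by omega) (by omega)) _
    _ ≤ ∑ b ∈ range (q + k), min q b := Finset.sum_le_sum fun b _ => by
      have := card_le b
      have := card_le_sub b
      split_ifs <;> omega
    _ = k * q + ∑ i ∈ range q, i := sum_range_min k q

lemma two_mul_sum_range_id (n : ℕ) : 2 * ((∑ i ∈ range n, i : ℕ) : ℤ) = n * (n - 1) := by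
  have := Finset.sum_range_id_mul_two n
  cases n with
  | zero => simp
  | succ n =>
    zify at this
    push_cast [Nat.add_sub_cancel] at this ⊢
    linarith

namespace CliqueReduced

variable {k q : ℕ} {r : Fin q → ℤ}

lemma two_mul_degree_add_le (hr : CliqueReduced k r) {u c : ℕ} (hu : k ≤ u + 1)
    (hc : #{j | (u : ℤ) < r j} + u + c ≤ k + q) :
    2 * degree r + c * (c - 1) ≤ 2 * k * q + q * (q - 1) := by
  lift r to Fin q → ℕ using hr.effective
  have parking (T : Finset (Fin q)) (hT : T.Nonempty) : ∃ j ∈ T, r j + #T ≤ k + q := by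
    exact_mod_cast hr.exists_mem_add_card_le hT
  simp only [Nat.cast_lt] at hc
  have := sum_add_sum_range_le (u := u) (p := k + q - u) (c := c) parking
    (by omega) (by omega) (by omega)
  have cast_le : degree (fun j => (r j : ℤ)) + ((∑ i ∈ range c, i : ℕ) : ℤ) ≤
      k * q + ((∑ i ∈ range q, i : ℕ) : ℤ) := by
    rw [degree]
    exact_mod_cast this
  linarith [two_mul_sum_range_id c, two_mul_sum_range_id q]

lemma two_mul_degree_le (hr : CliqueReduced k r) :
    2 * degree r ≤ 2 * k * q + q * (q - 1) := by
  have empty : ({j | ((k + q : ℕ) : ℤ) < r j} : Finset (Fin q)) = ∅ :=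
    Finset.filter_eq_empty_iff.2 fun j _ => by
      obtain ⟨i, hi, hle⟩ := hr.exists_mem_add_card_le (singleton_nonempty j)
      rw [mem_singleton.1 hi] at hle
      push_cast [card_singleton] at hle ⊢
      omega
  simpa using hr.two_mul_degree_add_le (u := k + q) (c := 0) (by omega) (by rw [empty]; simp)

/- No `g j` exceeds the quotient of `l + degree g` by `k + q + 1`, and it is attained only where
the remainder bounds the coefficient. -/
lemma card_emod_lt_add_le {E g : Fin q → ℤ} {l : ℤ} (hE : Effective E)
    (hr : Effective fun j => l - E j - cliqueLaplacian k g j) :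
    #{j | (l + degree g) % (k + q + 1) < l - E j - cliqueLaplacian k g j} +
      (l + degree g) % (k + q + 1) + (k + 1) * ((l + degree g) / (k + q + 1)) ≤ l := by
  have modulus_pos : (0 : ℤ) < k + q + 1 := by positivity
  set Q := (l + degree g) / (k + q + 1 : ℤ)
  set w := (l + degree g) % (k + q + 1 : ℤ)
  have division : w + (k + q + 1) * Q = l + degree g := Int.emod_add_mul_ediv _ _
  have w_lt : w < k + q + 1 := Int.emod_lt_of_pos _ modulus_pos
  set T : Finset (Fin q) := {j | w < l - E j - cliqueLaplacian k g j}
  have le_quot : ∀ j, g j ≤ Q - if j ∈ T then 1 else 0 := by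
    intro j
    have hrj := hr j
    have hEj := hE j
    simp only [cliqueLaplacian] at hrj
    split_ifs with hj
    · have hw := (mem_filter.1 hj).2
      simp only [cliqueLaplacian] at hw
      by_contra! hlt
      nlinarith
    · by_contra! hlt
      nlinarith
  have degree_le : degree g ≤ q * Q - #T := by
    refine (degree_mono le_quot).trans_eq ?_
    simp [degree]
  linarith

lemma exists_card_lt_add_le {E g : Fin q → ℤ} {l : ℤ} (hl : k < l) (hE : Effective E)
    (hr : CliqueReduced k fun j => l - E j - cliqueLaplacian k g j) (hg : 0 ≤ degree g) :
    ∃ u : ℕ, k ≤ u + 1 ∧ #{j | (u : ℤ) < l - E j - cliqueLaplacian k g j} + u ≤ l := by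
  have modulus_pos : (0 : ℤ) < k + q + 1 := by positivity
  have card_add_le := card_emod_lt_add_le hE hr.effective
  have division := Int.emod_add_mul_ediv (l + degree g) (k + q + 1)
  have Q_nonneg : 0 ≤ (l + degree g) / (k + q + 1) := Int.ediv_nonneg (by omega) modulus_pos.le
  have w_nonneg : 0 ≤ (l + degree g) % (k + q + 1) := Int.emod_nonneg _ modulus_pos.ne'
  set Q := (l + degree g) / (k + q + 1 : ℤ)
  set w := (l + degree g) % (k + q + 1 : ℤ)
  refine ⟨max w.toNat (k - 1), by omega, ?_⟩
  have card_le : #{j | (max w.toNat (k - 1) : ℕ) < l - E j - cliqueLaplacian k g j} ≤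
      #{j | w < l - E j - cliqueLaplacian k g j} :=
    card_le_card fun j hj => by
      simp only [mem_filter, mem_univ, true_and] at hj ⊢
      omega
  obtain hQ | hQ : Q = 0 ∨ 1 ≤ Q := by omega
  · rw [hQ, mul_zero, add_zero] at card_add_le division
    omega
  · have : (k + 1 : ℤ) ≤ (k + 1) * Q := le_mul_of_one_le_right (by positivity) hQ
    omega

end CliqueReduced

end DegreeBound

section Winnable

variable {G : Multigraph V} {v : V} {k q : ℕ}

lemma Winnable.sumElim {A : V → ℤ} {r : Fin q → ℤ} (hA : G.Winnable A) (hr : Effective r) :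
    (attachComplete G v k q).Winnable (Sum.elim A r) :=
  winnable_attachComplete_iff.2 ⟨0, fun j => by simpa [cliqueLaplacian, degree] using hr j, by
    simpa [degree] using hA⟩

lemma winnable_attachComplete_of_degree
    (hG : ∀ A : V → ℤ, (k * (k - 1) : ℤ) ≤ 2 * degree A → G.Winnable A) (A : V ⊕ Fin q → ℤ)
    (hA : ((k + q : ℕ) * ((k + q : ℕ) - 1) : ℤ) ≤ 2 * degree A) :
    (attachComplete G v k q).Winnable A := by
  obtain ⟨B, r, hr, hAB⟩ := exists_linEquiv_cliqueReduced G v k A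
  refine hAB.symm.winnable (Winnable.sumElim (hG _ ?_) hr.effective)
  have degree_eq := hAB.degree_eq
  rw [degree_sumElim] at degree_eq
  push_cast at hA
  nlinarith [hr.two_mul_degree_le]

lemma winnable_zsmul_sub_of_forall_le
    (hwin : ∀ A : V → ℤ, (k * (k - 1) : ℤ) ≤ 2 * degree A → G.Winnable A) {l : ℤ} (hkl : k < l)
    (hlq : l ≤ k + q) {E : V ⊕ Fin q → ℤ} (hE : Effective E) (hd : 2 * degree E ≤ l * (l + 3))
    (hle : ∀ j, E (Sum.inr j) ≤ l) :
    (attachComplete G v k q).Winnable (l • Sum.elim (Pi.single v (k + 1 : ℤ)) 1 - E) := by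
  have split : l • Sum.elim (Pi.single v (k + 1 : ℤ)) 1 - E =
      Sum.elim (l • Pi.single v (k + 1 : ℤ) - E ∘ Sum.inl) fun j => l - E (Sum.inr j) := by
    funext w
    rcases w with a | j <;> simp
  have hEr : Effective (E ∘ Sum.inr) := fun j => hE _
  obtain ⟨g, hr⟩ := exists_cliqueReduced k fun j => l - E (Sum.inr j)
  have degree_nonneg : 0 ≤ degree g := by
    have := hr.degree_nonpos (-g) (by
      rw [cliqueLaplacian_neg]
      exact fun j => by simpa using hle j)
    simpa [degree] using this
  have fire := linEquiv_attachComplete_fire (G := G) (v := v) (k := k)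
    (l • Pi.single v (k + 1 : ℤ) - E ∘ Sum.inl) (fun j => l - E (Sum.inr j)) g
  rw [← split] at fire
  refine fire.symm.winnable (Winnable.sumElim (hwin _ ?_) hr.effective)
  obtain ⟨u, hu, hcard⟩ := hr.exists_card_lt_add_le hkl hEr degree_nonneg
  have degree_le := hr.two_mul_degree_add_le (u := u) (c := (k + q - l).toNat) hu (by
    simp only [Pi.sub_apply, Function.comp_apply] at hcard ⊢
    omega)
  have degree_eq := fire.degree_eq
  rw [degree_sumElim, degree_sub, degree_zsmul, degree_sumElim, degree_single] at degree_eq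
  have degree_one : degree (1 : Fin q → ℤ) = q := by simp [degree]
  rw [Int.toNat_of_nonneg (by omega)] at degree_le
  rw [degree_one] at degree_eq
  nlinarith

/- One of the `l + 1` copies of the divisor is moved to the new vertex `j`. -/
lemma winnable_succ_zsmul_sub {l : ℤ} (hl : l + 1 ≤ k + q) {E : V ⊕ Fin q → ℤ} {j : Fin q}
    (h : (attachComplete G v k q).Winnable (l • Sum.elim (Pi.single v (k + 1 : ℤ)) 1 -
      (E - Pi.single (Sum.inr j) (l + 2)))) :
    (attachComplete G v k q).Winnable ((l + 1) • Sum.elim (Pi.single v (k + 1 : ℤ)) 1 - E) := by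
  have move := ((linEquiv_single_inr (G := G) (v := v) (k := k) j).add
    (.refl (l • Sum.elim (Pi.single v (k + 1 : ℤ)) 1))).sub_right E
  rw [add_smul, one_smul, add_comm]
  refine move.winnable (h.mono ?_)
  rw [← sub_add, sub_add_eq_add_sub, add_comm]
  refine sub_le_sub_right (add_le_add_left (Pi.single_mono _ ?_) _) E
  linarith

lemma winnable_attachComplete_zsmul_sub
    (hG : ∀ l : ℕ, l ≤ k → ∀ E : V → ℤ, Effective E → 2 * degree E ≤ l * (l + 3) →
      G.Winnable ((l : ℤ) • Pi.single v (k + 1 : ℤ) - E))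
    (hwin : ∀ A : V → ℤ, (k * (k - 1) : ℤ) ≤ 2 * degree A → G.Winnable A)
    {l : ℕ} (hl : l ≤ k + q) {E : V ⊕ Fin q → ℤ} (hE : Effective E)
    (hd : 2 * degree E ≤ l * (l + 3)) :
    (attachComplete G v k q).Winnable ((l : ℤ) • Sum.elim (Pi.single v (k + 1 : ℤ)) 1 - E) := by
  induction l generalizing E with
  | zero =>
    rw [hE.eq_zero_of_degree_nonpos (by push_cast at hd; linarith)]
    exact Effective.winnable fun w => by simp
  | succ l ih =>
    by_cases hle : ∀ j, E (Sum.inr j) ≤ (l + 1 : ℕ)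
    · obtain hlk | hkl := le_or_gt (l + 1) k
      · have hEl : Effective (E ∘ Sum.inl) := fun a => hE _
        have hEr : Effective (E ∘ Sum.inr) := fun j => hE _
        have degree_eq := degree_sumElim (E ∘ Sum.inl) (E ∘ Sum.inr)
        rw [Sum.elim_comp_inl_inr] at degree_eq
        convert Winnable.sumElim (hG (l + 1) hlk _ hEl (by linarith [hEr.degree_nonneg]))
          (fun j => sub_nonneg.2 (hle j)) using 1
        funext w
        rcases w with a | j <;> simp
      · exact winnable_zsmul_sub_of_forall_le hwin (by exact_mod_cast hkl) (by exact_mod_cast hl)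
          hE hd hle
    · push Not at hle
      obtain ⟨j, hj⟩ := hle
      have hd' : 2 * degree (E - Pi.single (Sum.inr j) (l + 2 : ℤ)) ≤ l * (l + 3) := by
        rw [degree_sub, degree_single]
        push_cast at hd
        linarith
      have hjl : (l + 2 : ℤ) ≤ E (Sum.inr j) := by
        push_cast at hj
        linarith
      rw [Nat.cast_succ]
      exact winnable_succ_zsmul_sub (by omega) (ih (by omega) (hE.sub_single hjl) hd')

end Winnable

section StaircaseOrder

variable {G : Multigraph V} {k q : ℕ}

/-- A numbering of the vertices of `G`, starting at the vertex `s`, whose acyclic orientation has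
indegree `i + 1` at the vertex numbered `i`, for `i > 0`. -/
structure StaircaseOrder (G : Multigraph V) (n : ℕ) (e : V ≃ Fin n) (s : V) : Prop where
  source : (e s : ℕ) = 0
  indegree : ∀ w, w ≠ s → ∑ u with e u < e w, (G.mult w u : ℤ) = e w + 1

lemma StaircaseOrder.attach {e : V ≃ Fin k} {s : V} (he : G.StaircaseOrder k e s) (v : V) :
    (attachComplete G v k q).StaircaseOrder (k + q)
      ((e.sumCongr (Equiv.refl (Fin q))).trans finSumFinEquiv) (Sum.inl s) where
  source := by simpa using he.source
  indegree w hw := by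
    have inl_val (a : V) : (((e.sumCongr (Equiv.refl (Fin q))).trans finSumFinEquiv (Sum.inl a) :
      Fin (k + q)) : ℕ) = e a := rfl
    have inr_val (j : Fin q) : (((e.sumCongr (Equiv.refl (Fin q))).trans finSumFinEquiv
      (Sum.inr j) : Fin (k + q)) : ℕ) = k + j := rfl
    simp only [Finset.sum_filter, Fintype.sum_sum_type, Fin.lt_def] at he ⊢
    rcases w with a | j
    · have := he.indegree a (by simpa using hw)
      rw [Finset.sum_filter] at this
      have not_lt (j : Fin q) : ¬ k + (j : ℕ) < e a := by omega
      simpa [attachComplete, inl_val, inr_val, not_lt] using this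
    · have lt (a : V) : (e a : ℕ) < k + j := by omega
      have clique_part : ∑ i, (if i < j then (if j = i then 0 else 1 : ℤ) else 0) = j := by
        have (i : Fin q) : (if i < j then (if j = i then 0 else 1 : ℤ) else 0) =
            if i < j then 1 else 0 := by
          split_ifs with hij hji <;> grind
        simp [this, Finset.filter_gt_eq_Iio]
      simp only [inl_val, inr_val, lt, ↓reduceIte, attachComplete, Nat.cast_ite, Nat.cast_add,
        Nat.cast_one, Nat.cast_zero, sum_ite_eq', mem_univ, add_lt_add_iff_left, Fin.val_fin_lt,
        clique_part]
      ring

lemma two_mul_sum_range_tsub {m n : ℕ} (h : m ≤ n) :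
    2 * ∑ i ∈ range n, ((m - i : ℕ) : ℤ) = m * (m + 1) := by
  induction n generalizing m with
  | zero => simp [Nat.le_zero.1 h]
  | succ n ih =>
    cases m with
    | zero => simp
    | succ m =>
      simp only [Finset.sum_range_succ', Nat.add_sub_add_right, Nat.sub_zero]
      push_cast
      linarith [ih (Nat.le_of_succ_le_succ h)]

lemma StaircaseOrder.exists_not_winnable {n : ℕ} {e : V ≃ Fin n} {s : V}
    (he : G.StaircaseOrder n e s) {l : ℕ} (hl : l ≤ n) :
    ∃ E : V → ℤ, Effective E ∧ 2 * degree E = l * (l + 3) + 2 ∧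
      ¬ G.Winnable ((l : ℤ) • (1 + Pi.single s 1) - E) := by
  have : Nonempty V := ⟨s⟩
  refine ⟨(fun w => ((l - e w : ℕ) : ℤ)) + Pi.single s (l + 1 : ℤ), ?_, ?_, ?_⟩
  · exact Effective.add (fun w => by positivity) (effective_single s (by positivity))
  · have sum_eq : degree (fun w => ((l - e w : ℕ) : ℤ)) = ∑ i ∈ range n, ((l - i : ℕ) : ℤ) := by
      rw [degree, e.sum_comp fun i : Fin n => ((l - i : ℕ) : ℤ), Finset.sum_range]
    rw [degree_add, degree_single, sum_eq, mul_add, two_mul_sum_range_tsub hl]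
    ring
  · refine not_winnable_of_lt_indegree e fun w => ?_
    obtain rfl | hw := eq_or_ne w s
    · simp only [Pi.sub_apply, Pi.smul_apply, Pi.add_apply, Pi.one_apply, Pi.single_eq_same,
        he.source, Nat.sub_zero, smul_eq_mul]
      refine lt_of_lt_of_le ?_ (Finset.sum_nonneg fun u _ => by positivity)
      linarith
    · rw [he.indegree w hw]
      simp only [Pi.sub_apply, Pi.smul_apply, Pi.add_apply, Pi.one_apply, smul_eq_mul,
        Pi.single_eq_of_ne hw, add_zero, mul_one]
      omega

end StaircaseOrder

section RankDegree

variable {G : Multigraph V} {v : V} {k q : ℕ} {A E : V → ℤ} {r F h : Fin q → ℤ} {j : Fin q}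

lemma one_le_of_lt_add_degree (hh : Effective h) (hle : F ≤ r + cliqueLaplacian k h)
    (hj : r j < F j + degree h) : 1 ≤ h j := by
  have hFj := hle j
  simp only [Pi.add_apply, cliqueLaplacian] at hFj
  by_contra! hlt
  have hj0 : h j = 0 := le_antisymm (Int.lt_add_one_iff.1 hlt) (hh j)
  rw [hj0, mul_zero] at hFj
  linarith

lemma degree_mul_sub_le (hr : Effective r) (hh : Effective h) (hle : 0 ≤ r + cliqueLaplacian k h) :
    degree h * (q - degree h) ≤ degree r := by
  have termwise : degree h • (1 - h) ≤ r := fun j => by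
    simp only [Pi.smul_apply, Pi.sub_apply, Pi.one_apply, smul_eq_mul]
    obtain hj | hj : h j = 0 ∨ 1 ≤ h j := by
      have := hh j
      omega
    · have := hle j
      simp only [Pi.zero_apply, Pi.add_apply, cliqueLaplacian, hj] at this ⊢
      linarith
    · nlinarith [hr j, hh.degree_nonneg]
  have degree_one : degree (1 : Fin q → ℤ) = q := by simp [degree]
  rw [← degree_one, ← degree_sub, ← degree_zsmul]
  exact degree_mono termwise

namespace CliqueReduced

variable [Nonempty V]

lemma exists_of_degree_add_le_rank (hr : CliqueReduced k r) (hE : Effective E) (hF : Effective F)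
    (hd : degree E + degree F ≤ (attachComplete G v k q).rank (Sum.elim A r)) :
    ∃ h, Effective h ∧ F ≤ r + cliqueLaplacian k h ∧
      G.Winnable (A - E - Pi.single v ((k + 1) * degree h)) := by
  have hEF : Effective (Sum.elim E F) := Sum.rec hE hF
  have hw := winnable_sub_of_degree_le_rank hEF ((degree_sumElim E F).trans_le hd)
  rw [← Sum.elim_sub_sub] at hw
  obtain ⟨g, hg, hA⟩ := winnable_attachComplete_iff.1 hw
  have g_nonpos := hr.nonpos (hg.trans (sub_le_self r hF))
  refine ⟨-g, fun j => neg_nonneg.2 (g_nonpos j), ?_, ?_⟩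
  · rw [cliqueLaplacian_neg, ← sub_eq_add_neg]
    exact le_sub_comm.1 hg
  · have degree_neg : degree (-g) = -degree g := by simp [degree]
    rwa [degree_neg, mul_neg, Pi.single_neg, sub_neg_eq_add]

lemma rank_le (hr : CliqueReduced k r) :
    (attachComplete G v k q).rank (Sum.elim A r) ≤ G.rank A :=
  le_rank_iff.2 fun E hE hd => by
    have degree_le : degree E + degree (0 : Fin q → ℤ) ≤
        (attachComplete G v k q).rank (Sum.elim A r) := by simpa [degree] using hd.le
    obtain ⟨h, hh, -, hA⟩ := hr.exists_of_degree_add_le_rank hE (fun _ => le_rfl) degree_le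
    have := hh.degree_nonneg
    exact hA.mono (sub_le_self _ (effective_single v (by positivity)))

lemma exists_of_apply_nonpos (hr : CliqueReduced k r) (hj : r j ≤ 0) (hE : Effective E)
    (hd : degree E + 1 ≤ (attachComplete G v k q).rank (Sum.elim A r)) :
    ∃ s : ℤ, 1 ≤ s ∧ s * (q - s) ≤ degree r ∧
      k + q + k * (s - 1) ≤ degree A + degree r - degree E ∧
      G.Winnable (A - E - Pi.single v ((k + 1) * s)) := by
  have hF := effective_single j zero_le_one
  obtain ⟨h, hh, hle, hA⟩ :=
    hr.exists_of_degree_add_le_rank hE hF (by rwa [degree_single])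
  have hj1 : 1 ≤ h j := one_le_of_lt_add_degree hh hle (by
    rw [Pi.single_eq_same]
    linarith [hh.degree_nonneg])
  have hs : 1 ≤ degree h := hj1.trans (Finset.single_le_sum (fun i _ => hh i) (mem_univ j))
  have hsr := degree_mul_sub_le hr.effective hh ((hF : 0 ≤ Pi.single j 1).trans hle)
  have hsA := hA.degree_nonneg
  rw [degree_sub, degree_sub, degree_single] at hsA
  refine ⟨_, hs, hsr, ?_, hA⟩
  obtain hq | hq := le_total (degree h) q
  · nlinarith
  · nlinarith [hr.effective.degree_nonneg]

lemma le_degree_of_one_le_rank (hG : ∀ A : V → ℤ, 1 ≤ G.rank A → k ≤ degree A)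
    (hr : CliqueReduced k r) (hrank : 1 ≤ (attachComplete G v k q).rank (Sum.elim A r)) :
    k + q ≤ degree A + degree r := by
  by_cases hpos : ∀ j, 1 ≤ r j
  · have q_le : (q : ℤ) ≤ degree r := by simpa [degree] using degree_mono (A := 1) hpos
    linarith [hG A (hrank.trans hr.rank_le)]
  · push Not at hpos
    obtain ⟨j, hj⟩ := hpos
    obtain ⟨s, hs, -, hle, -⟩ := hr.exists_of_apply_nonpos (E := 0) (Int.lt_add_one_iff.1 hj)
      (fun _ => le_rfl) (by simpa [degree] using hrank)
    have degree_zero : degree (0 : V → ℤ) = 0 := by simp [degree]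
    nlinarith

end CliqueReduced

lemma le_degree_attachComplete [Nonempty V] (hG : ∀ A : V → ℤ, 1 ≤ G.rank A → k ≤ degree A)
    {A : V ⊕ Fin q → ℤ} (hA : 1 ≤ (attachComplete G v k q).rank A) : (k + q : ℕ) ≤ degree A := by
  obtain ⟨B, r, hr, hAB⟩ := exists_linEquiv_cliqueReduced G v k A
  rw [hAB.degree_eq, degree_sumElim, Nat.cast_add]
  exact hr.le_degree_of_one_le_rank hG (hAB.rank_eq ▸ hA)

end RankDegree

section Uniqueness

variable {G : Multigraph V} {v : V} {k q : ℕ} {A : V → ℤ} {r : Fin q → ℤ} {j : Fin q}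

namespace CliqueReduced

variable [Nonempty V]

lemma linEquiv_of_forall_one_le (hr : CliqueReduced k r) (j : Fin q) (hpos : ∀ i, 1 ≤ r i)
    (hA : k + 1 ≤ degree A) (hd : degree A + degree r ≤ k + q + 1)
    (hrank : 2 ≤ (attachComplete G v k q).rank (Sum.elim A r)) :
    (attachComplete G v k q).LinEquiv (Sum.elim A r) (Sum.elim (Pi.single v (k + 1 : ℤ)) 1) := by
  have degree_one : degree (1 : Fin q → ℤ) = q := by simp [degree]
  have r_eq_one : r - 1 = 0 :=
    Effective.eq_zero_of_degree_nonpos (fun i => sub_nonneg.2 (hpos i)) (by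
      rw [degree_sub]
      linarith)
  obtain rfl : r = 1 := sub_eq_zero.1 r_eq_one
  obtain ⟨h, hh, hle, hw⟩ := hr.exists_of_degree_add_le_rank (E := 0) (F := Pi.single j 2)
    (fun _ => le_rfl) (effective_single j zero_le_two) (by
      rw [degree_single]
      simpa [degree] using hrank)
  have hj1 : 1 ≤ h j := one_le_of_lt_add_degree hh hle (by
    rw [Pi.single_eq_same, Pi.one_apply]
    linarith [hh.degree_nonneg])
  have hs : 1 ≤ degree h := hj1.trans (Finset.single_le_sum (fun i _ => hh i) (mem_univ j))
  rw [sub_zero] at hw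
  have hw' : G.Winnable (A - Pi.single v (k + 1 : ℤ)) :=
    hw.mono (sub_le_sub_left (Pi.single_mono v (le_mul_of_one_le_right (by positivity) hs)) A)
  refine (hw'.linEquiv_of_degree_le ?_).sumElim v k 1
  rw [degree_single]
  linarith

lemma exists_ne_apply_le_one (hq : 1 < q) (hdr : degree r ≤ q - 1) (hj : 0 ≤ r j) :
    ∃ z, z ≠ j ∧ r z ≤ 1 := by
  have : (univ.erase j).Nonempty := card_pos.1 (by simpa using hq)
  obtain ⟨z, hz, hle⟩ := Finset.exists_le_of_sum_le (f := r) (g := fun _ => 1) this (by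
    have erase : r j + ∑ i ∈ univ.erase j, r i = degree r := Finset.add_sum_erase _ r (mem_univ j)
    have card_erase : ((q - 1 : ℕ) : ℤ) = q - 1 := by omega
    simp only [sum_const, card_erase_of_mem (mem_univ j), card_univ, Fintype.card_fin,
      nsmul_eq_mul, mul_one, card_erase]
    linarith)
  exact ⟨z, ne_of_mem_erase hz, hle⟩

lemma card_le_one_of_apply_nonpos (hr : CliqueReduced k r) (hk : 1 ≤ k) (hj : r j ≤ 0)
    (hdA : degree A ≤ k + 2) (hdr : degree r ≤ q - 1)
    (hrank : 2 ≤ (attachComplete G v k q).rank (Sum.elim A r)) : q ≤ 1 := by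
  by_contra! hq
  obtain ⟨z, hzj, hz⟩ := exists_ne_apply_le_one hq hdr (hr.effective j)
  obtain ⟨h, hh, hle, hw⟩ := hr.exists_of_degree_add_le_rank (E := 0)
    (F := Pi.single j 1 + Pi.single z 1) (fun _ => le_rfl)
    ((effective_single j zero_le_one).add (effective_single z zero_le_one)) (by
      rw [degree_add, degree_single, degree_single]
      simpa [degree] using hrank)
  have hj1 : 1 ≤ h j := one_le_of_lt_add_degree hh hle (by
    simp only [Pi.add_apply, Pi.single_eq_same, Pi.single_eq_of_ne hzj.symm, add_zero]
    linarith [hh.degree_nonneg])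
  have hs : 1 ≤ degree h := hj1.trans (Finset.single_le_sum (fun i _ => hh i) (mem_univ j))
  have hz1 : 1 ≤ h z := one_le_of_lt_add_degree hh hle (by
    simp only [Pi.add_apply, Pi.single_eq_same, Pi.single_eq_of_ne hzj, zero_add]
    linarith)
  have hs2 : 2 ≤ degree h := calc
    (2 : ℤ) ≤ h j + h z := by linarith
    _ = ∑ i ∈ {j, z}, h i := (Finset.sum_pair hzj.symm).symm
    _ ≤ degree h := Finset.sum_le_univ_sum_of_nonneg hh
  have := hw.degree_nonneg
  rw [sub_zero, degree_sub, degree_single] at this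
  nlinarith

end CliqueReduced

lemma two_zsmul_linEquiv_single_inr (hA : G.LinEquiv A (Pi.single v 3)) :
    (attachComplete G v 1 1).LinEquiv ((2 : ℤ) • Sum.elim A 0)
      ((2 : ℤ) • Sum.elim (Pi.single v 2) 1) := by
  have fire := linEquiv_attachComplete_fire (G := G) (v := v) (k := 1) (q := 1)
    (Pi.single v 6) 0 (-1)
  convert ((hA.sumElim v 1 (0 : Fin 1 → ℤ)).zsmul 2).trans (.trans (.of_eq ?_) fire) using 1
  · funext w
    rcases w with a | j
    · obtain rfl | ha := eq_or_ne a v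
      · simp [degree]
      · simp [ha]
    · simp [cliqueLaplacian, degree]
  · funext w
    rcases w with a | j
    · obtain rfl | ha := eq_or_ne a v
      · simp
      · simp [ha]
    · simp

lemma CliqueReduced.two_zsmul_linEquiv [Nonempty V] (hr : CliqueReduced k r) (hk : 1 ≤ k)
    (hG : ∀ A : V → ℤ, 1 ≤ G.rank A → k ≤ degree A) (hj : r j ≤ 0)
    (hd : degree A + degree r ≤ k + q + 1)
    (hrank : 2 ≤ (attachComplete G v k q).rank (Sum.elim A r)) :
    k + q = 2 ∧ (attachComplete G v k q).LinEquiv ((2 : ℤ) • Sum.elim A r)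
      ((2 : ℤ) • Sum.elim (Pi.single v (k + 1 : ℤ)) 1) := by
  have remove (x : V) : (q - 1 : ℤ) ≤ degree r ∧
      G.Winnable (A - Pi.single x 1 - Pi.single v (k + 1 : ℤ)) := by
    obtain ⟨s, hs, hsr, hle, hw⟩ := hr.exists_of_apply_nonpos hj (effective_single x zero_le_one)
      (by rw [degree_single]; exact hrank)
    rw [degree_single] at hle
    obtain rfl : s = 1 := by nlinarith
    exact ⟨by linarith, by rwa [mul_one] at hw⟩
  have degree_ge : k + 2 ≤ degree A := by
    have := (remove v).2.degree_nonneg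
    rw [degree_sub, degree_sub, degree_single, degree_single] at this
    linarith
  have hdr := (remove v).1
  obtain rfl : q = 1 := by
    have := hr.card_le_one_of_apply_nonpos hk hj (by linarith) (by linarith) hrank
    have := j.pos
    omega
  obtain rfl : r = 0 := hr.effective.eq_zero_of_degree_nonpos (by push_cast at hd; linarith)
  have linEquiv_single (x : V) : G.LinEquiv (A - Pi.single v (k + 1 : ℤ)) (Pi.single x 1) := by
    refine Winnable.linEquiv_of_degree_le (by rw [sub_right_comm]; exact (remove x).2) ?_
    rw [degree_sub, degree_single, degree_single]
    push_cast at hd hdr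
    linarith
  obtain rfl : k = 1 := by
    have := hG _ (one_le_rank_single fun x => (linEquiv_single v).symm.trans (linEquiv_single x))
    rw [degree_single] at this
    omega
  refine ⟨rfl, two_zsmul_linEquiv_single_inr ?_⟩
  have := (linEquiv_single v).add (.refl (Pi.single v 2))
  rw [← Pi.single_add] at this
  simpa using this

lemma linEquiv_or_of_two_le_rank [Nonempty V] (hk : 1 ≤ k)
    (hG : ∀ A : V → ℤ, 1 ≤ G.rank A → k ≤ degree A) (j : Fin q) {D : V ⊕ Fin q → ℤ}
    (hd : degree D = (k + q : ℕ) + 1) (hrank : 2 ≤ (attachComplete G v k q).rank D) :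
    (attachComplete G v k q).LinEquiv D (Pi.single (Sum.inr j) ((k + q : ℕ) + 1 : ℤ)) ∨
      k + q = 2 ∧ (attachComplete G v k q).LinEquiv ((2 : ℤ) • D)
        ((2 : ℤ) • Pi.single (Sum.inr j) ((k + q : ℕ) + 1 : ℤ)) := by
  obtain ⟨A, r, hr, hDA⟩ := exists_linEquiv_cliqueReduced G v k D
  have base := (linEquiv_single_inr (G := G) (v := v) (k := k) j).symm
  rw [hDA.degree_eq, degree_sumElim] at hd
  rw [hDA.rank_eq] at hrank
  push_cast at hd ⊢
  by_cases hpos : ∀ i, 1 ≤ r i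
  · have degree_ge : k + 1 ≤ degree A := by
      have hsub := sub_degree_le_rank_sub (G := G) (A := A) (effective_single v zero_le_one)
      rw [degree_single] at hsub
      have := hG (A - Pi.single v 1) (by linarith [hr.rank_le.trans' hrank])
      rw [degree_sub, degree_single] at this
      linarith
    exact .inl (hDA.trans ((hr.linEquiv_of_forall_one_le j hpos degree_ge hd.le hrank).trans base))
  · push Not at hpos
    obtain ⟨i, hi⟩ := hpos
    obtain ⟨hkq, h2⟩ := hr.two_zsmul_linEquiv hk hG (Int.lt_add_one_iff.1 hi) hd.le hrank
    exact .inr ⟨hkq, (hDA.zsmul 2).trans (h2.trans (base.zsmul 2))⟩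

end Uniqueness

/-- `G` is built from a point by repeatedly attaching a complete graph to the base vertex by means
of `attachComplete`, where one of the new vertices becomes the base. These are the quasi-banana
graphs; `n` is the number of vertices and `v` the base vertex. -/
inductive IsCliqueTower :
    ∀ {W : Type} [Fintype W] [DecidableEq W], Multigraph W → ℕ → W → Prop
  | point (G : Multigraph Unit) : IsCliqueTower G 1 ()
  | attach {W : Type} [Fintype W] [DecidableEq W] {G : Multigraph W} {n q : ℕ} {v : W}
      (hG : IsCliqueTower G n v) (j : Fin q) :
      IsCliqueTower (attachComplete G v n q) (n + q) (Sum.inr j)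

namespace IsCliqueTower

variable {W : Type} [Fintype W] [DecidableEq W] {G : Multigraph W} {n : ℕ} {v : W}

lemma one_le (h : IsCliqueTower G n v) : 1 ≤ n := by
  induction h with
  | point => exact le_rfl
  | attach _ _ ih => exact le_add_right ih

lemma winnable_of_degree (h : IsCliqueTower G n v) {A : W → ℤ}
    (hA : (n * (n - 1) : ℤ) ≤ 2 * degree A) : G.Winnable A := by
  induction h with
  | point G =>
    have degree_eq : degree A = A () := by simp [degree]
    exact Effective.winnable fun _ => show 0 ≤ A () by
      push_cast at hA
      linarith
  | attach _ _ ih => exact winnable_attachComplete_of_degree (fun _ => ih) A hA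

lemma winnable_zsmul_sub (h : IsCliqueTower G n v) {l : ℕ} (hl : l ≤ n) {E : W → ℤ}
    (hE : Effective E) (hd : 2 * degree E ≤ l * (l + 3)) :
    G.Winnable ((l : ℤ) • Pi.single v (n + 1 : ℤ) - E) := by
  induction h generalizing l with
  | point G =>
    have degree_eq : degree E = E () := by simp [degree]
    rw [degree_eq] at hd
    refine Effective.winnable fun _ => sub_nonneg.2 (show E () ≤ l * 2 from ?_)
    interval_cases l <;> push_cast at hd ⊢ <;> linarith
  | @attach W _ _ G n q v h j ih =>
    have base := ((linEquiv_single_inr (G := G) (v := v) (k := n) j).zsmul l).sub_right E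
    rw [Nat.cast_add]
    exact base.symm.winnable (winnable_attachComplete_zsmul_sub (fun _ hl _ => ih hl)
      (fun _ => h.winnable_of_degree) hl hE hd)

lemma exists_staircaseOrder (h : IsCliqueTower G n v) :
    ∃ e s, G.StaircaseOrder n e s ∧ G.LinEquiv (Pi.single v (n + 1 : ℤ)) (1 + Pi.single s 1) := by
  induction h with
  | point G =>
    refine ⟨Fintype.equivFinOfCardEq rfl, (), ⟨by simp, fun w hw => absurd rfl hw⟩, .of_eq ?_⟩
    funext w
    simp
  | @attach W _ _ G n q v _ j ih =>
    obtain ⟨e, s, he, hs⟩ := ih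
    refine ⟨_, _, he.attach v, ?_⟩
    rw [Nat.cast_add]
    refine (linEquiv_single_inr j).trans ((hs.sumElim v n 1).trans (.of_eq ?_))
    funext w
    rcases w with a | i <;> simp [Pi.single_apply]

lemma rank_zsmul_single (h : IsCliqueTower G n v) {l : ℕ} (hl : l ≤ n) :
    G.rank ((l : ℤ) • Pi.single v (n + 1 : ℤ)) = l * (l + 3) / 2 := by
  have : Nonempty W := ⟨v⟩
  refine le_antisymm (Int.lt_add_one_iff.1 ?_) (le_rank_iff.2 fun E hE hd => ?_)
  · obtain ⟨e, s, he, hs⟩ := h.exists_staircaseOrder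
    obtain ⟨E, hE, hd, hnot⟩ := he.exists_not_winnable hl
    have := mt (winnable_sub_of_degree_le_rank hE) hnot
    rw [(hs.zsmul l).rank_eq]
    omega
  · exact h.winnable_zsmul_sub hl hE (by omega)

lemma le_degree_of_one_le_rank (h : IsCliqueTower G n v) {A : W → ℤ} (hA : 1 ≤ G.rank A) :
    n ≤ degree A := by
  induction h with
  | point G =>
    have := (winnable_sub_of_degree_le_rank (effective_single () zero_le_one)
      ((degree_single _ _).trans_le hA)).degree_nonneg
    rw [degree_sub, degree_single] at this
    push_cast
    linarith
  | @attach W _ _ _ _ _ v _ _ ih =>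
    have : Nonempty W := ⟨v⟩
    exact le_degree_attachComplete (fun _ => ih) hA

lemma lt_degree_of_two_le_rank (h : IsCliqueTower G n v) {A : W → ℤ} (hA : 2 ≤ G.rank A) :
    n < degree A := by
  have : Nonempty W := ⟨v⟩
  have hsub := sub_degree_le_rank_sub (G := G) (A := A) (effective_single v zero_le_one)
  rw [degree_single] at hsub
  have := h.le_degree_of_one_le_rank (A := A - Pi.single v 1) (by linarith)
  rw [degree_sub, degree_single] at this
  linarith

lemma rank_single (h : IsCliqueTower G n v) : G.rank (Pi.single v (n + 1 : ℤ)) = 2 := by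
  simpa using h.rank_zsmul_single h.one_le

lemma gonality_two (h : IsCliqueTower G n v) : G.gonality 2 = n + 1 := by
  rw [gonality_eq h.rank_single, degree_single]
  intro B hB
  rw [degree_single]
  exact h.lt_degree_of_two_le_rank hB.ge

lemma gonality_one (h : IsCliqueTower G n v) : G.gonality 1 = n := by
  have : Nonempty W := ⟨v⟩
  have degree_eq : degree (Pi.single v (n : ℤ)) = n := degree_single v _
  have rank_eq : G.rank (Pi.single v (n : ℤ)) = 1 := by
    refine le_antisymm (Int.lt_add_one_iff.1 (not_le.1 fun h2 => ?_)) ?_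
    · have := h.lt_degree_of_two_le_rank h2
      omega
    · have hsub := sub_degree_le_rank_sub (G := G) (A := Pi.single v (n + 1 : ℤ))
        (effective_single v zero_le_one)
      rw [h.rank_single, degree_single, ← Pi.single_sub, add_sub_cancel_right] at hsub
      linarith
  rw [gonality_eq rank_eq, degree_eq]
  intro B hB
  rw [degree_eq]
  exact h.le_degree_of_one_le_rank hB.ge

lemma linEquiv_or_two_zsmul (h : IsCliqueTower G n v) {D : W → ℤ} (hd : degree D = n + 1)
    (hD : 2 ≤ G.rank D) :
    G.LinEquiv D (Pi.single v (n + 1 : ℤ)) ∨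
      n = 2 ∧ G.LinEquiv ((2 : ℤ) • D) ((2 : ℤ) • Pi.single v (n + 1 : ℤ)) := by
  cases h with
  | point G =>
    refine .inl (.of_eq (funext fun _ => ?_))
    simpa [degree] using hd
  | @attach W _ _ G n q v h j =>
    have : Nonempty W := ⟨v⟩
    exact linEquiv_or_of_two_le_rank h.one_le (fun _ => h.le_degree_of_one_le_rank) j hd hD

lemma linEquiv_canonical (h : IsCliqueTower G n v) :
    G.LinEquiv ((n - 2 : ℤ) • Pi.single v (n + 1 : ℤ)) G.canonical := by
  induction h with
  | point G =>
    refine .of_eq (funext fun _ => ?_)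
    simp [canonical, valence, G.loopless]
  | @attach W _ _ G n q v _ j ih =>
    have fire := ((linEquiv_single_inr (G := G) (v := v) (k := n) j).zsmul (n + q - 2))
    rw [Nat.cast_add, canonical_attachComplete]
    refine fire.trans (.trans (.of_eq ?_)
      ((ih.add (.refl (Pi.single v (q * (n + 1) : ℤ)))).sumElim v n _))
    funext w
    rcases w with a | i
    · obtain rfl | ha := eq_or_ne a v
      · simp only [Pi.smul_apply, Sum.elim_inl, Pi.single_eq_same, smul_eq_mul, Pi.add_apply]
        ring
      · simp [ha]
    · simp

lemma zsmul_linEquiv (h : IsCliqueTower G n v) {D : W → ℤ} (hD : G.Realises 2 D) {l : ℤ}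
    (hl : n = 2 → Even l) : G.LinEquiv (l • D) (l • Pi.single v (n + 1 : ℤ)) := by
  obtain hlin | ⟨h2, hlin⟩ := h.linEquiv_or_two_zsmul (hD.2.trans h.gonality_two) hD.1.ge
  · exact hlin.zsmul l
  · obtain ⟨m, rfl⟩ := hl h2
    simpa only [smul_smul, mul_two] using hlin.zsmul m

lemma rank_zsmul (h : IsCliqueTower G n v) {D : W → ℤ} (hD : G.Realises 2 D) {l : ℤ}
    (hl : -1 ≤ l) (hln : l ≤ n) : G.rank (l • D) = l * (l + 3) / 2 := by
  have : Nonempty W := ⟨v⟩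
  obtain rfl | hl0 := hl.eq_or_lt
  · refine rank_eq_neg_one_of_degree_neg ?_
    rw [degree_zsmul, hD.2, h.gonality_two]
    linarith
  lift l to ℕ using hl0
  by_cases hodd : n = 2 → Even (l : ℤ)
  · rw [(h.zsmul_linEquiv hD hodd).rank_eq, h.rank_zsmul_single (by exact_mod_cast hln)]
  · obtain rfl : l = 1 := by
      simp only [Classical.not_imp, Int.even_coe_nat, Nat.even_iff] at hodd
      omega
    simpa using hD.1

end IsCliqueTower

section QuasiBanana

variable {G : Multigraph V}

lemma comap_sumElim {W : Type*} [Fintype W] [DecidableEq W] {k q : ℕ} {v : W} {φ : W → V}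
    {ψ : Fin q → V} (hφψ : ∀ a j, G.mult (φ a) (ψ j) = if a = v then k + 1 else 0)
    (hψ : ∀ i j, G.mult (ψ i) (ψ j) = if i = j then 0 else 1) :
    G.comap (Sum.elim φ ψ) = attachComplete (G.comap φ) v k q := by
  refine (Multigraph.mk.injEq ..).mpr ?_
  funext x y
  rcases x with a | i <;> rcases y with b | j
  · rfl
  · exact hφψ a j
  · exact (G.symm _ _).trans (hφψ b i)
  · exact hψ i j

namespace IsQBLabelling

variable {m : ℕ} {q : ℕ → ℕ} {ℓ : V → ℕ × ℕ}

lemma mult_of_fst_eq (h : G.IsQBLabelling m q ℓ) {x y : V} (hxy : x ≠ y)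
    (hfst : (ℓ x).1 = (ℓ y).1) : G.mult x y = 1 := by
  rw [h.2.2.2.2 x y hxy, if_pos hfst]

lemma mult_of_fst_lt (h : G.IsQBLabelling m q ℓ) {x y : V} (hlt : (ℓ x).1 < (ℓ y).1) :
    G.mult x y = if (ℓ x).1 + 1 = (ℓ y).1 ∧ (ℓ x).2 = 1 then
      (∑ i ∈ Finset.Icc 1 (ℓ x).1, q i) + 2 else 0 := by
  rw [h.2.2.2.2 x y fun hxy => hlt.ne (hxy ▸ rfl), if_neg hlt.ne,
    if_neg (c := (ℓ y).1 + 1 = (ℓ x).1 ∧ _) fun hyx => by omega]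

lemma exists_level (h : G.IsQBLabelling m q ℓ) {i : ℕ} (hi : i < m) :
    ∃ ψ : Fin (q (i + 1)) → V, ψ.Injective ∧ (∀ j, ℓ (ψ j) = (i + 1, (j : ℕ) + 1)) ∧
      ∀ x, (ℓ x).1 = i + 1 → x ∈ Set.range ψ := by
  obtain ⟨-, hinj, hbound, hsurj, -⟩ := h
  choose ψ hψ using fun j : Fin (q (i + 1)) =>
    hsurj (i + 1) (j + 1) hi (by omega) (by simp [qbSize])
  refine ⟨ψ, fun a b hab => ?_, hψ, fun x hx => ?_⟩
  · have := hψ b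
    rw [← hab, hψ a] at this
    simpa [Fin.val_inj] using this
  obtain ⟨-, hx1, hx2⟩ := hbound x
  rw [hx, qbSize, if_neg i.succ_ne_zero] at hx2
  refine ⟨⟨(ℓ x).2 - 1, by omega⟩, hinj ((hψ _).trans (Prod.ext hx.symm ?_))⟩
  exact Nat.sub_add_cancel hx1

lemma comap_sumElim (h : G.IsQBLabelling m q ℓ) {W : Type*} [Fintype W] [DecidableEq W] {i : ℕ}
    {φ : W → V} {ψ : Fin (q (i + 1)) → V} {v : W} (hφ : φ.Injective) (hψ : ψ.Injective)
    (hφℓ : ∀ a, (ℓ (φ a)).1 ≤ i) (hv : ℓ (φ v) = (i, 1))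
    (hψℓ : ∀ j, ℓ (ψ j) = (i + 1, (j : ℕ) + 1)) :
    G.comap (Sum.elim φ ψ) =
      attachComplete (G.comap φ) v (∑ k ∈ Finset.Icc 1 i, q k + 1) (q (i + 1)) := by
  refine Multigraph.comap_sumElim (fun a j => ?_) fun a b => ?_
  · have base_iff : (ℓ (φ a)).1 + 1 = i + 1 ∧ (ℓ (φ a)).2 = 1 ↔ a = v := by
      rw [← hφ.eq_iff, ← h.2.1.eq_iff, hv, Prod.ext_iff, Nat.add_right_cancel_iff]
    rw [h.mult_of_fst_lt (by rw [hψℓ]; exact Nat.lt_succ_of_le (hφℓ a)), hψℓ]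
    obtain rfl | ha := eq_or_ne a v
    · simp [hv]
    · rw [if_neg (mt base_iff.1 ha), if_neg ha]
  · obtain rfl | hab := eq_or_ne a b
    · rw [if_pos rfl, G.loopless]
    · rw [if_neg hab, h.mult_of_fst_eq (hψ.ne hab) (by rw [hψℓ, hψℓ])]

lemma exists_isCliqueTower_le (h : G.IsQBLabelling m q ℓ) {i : ℕ} (hi : i ≤ m) :
    ∃ (W : Type) (_ : Fintype W) (_ : DecidableEq W) (φ : W → V) (v : W),
      φ.Injective ∧ (∀ x, x ∈ Set.range φ ↔ (ℓ x).1 ≤ i) ∧ ℓ (φ v) = (i, 1) ∧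
      IsCliqueTower (G.comap φ) (∑ k ∈ Finset.Icc 1 i, q k + 1) v := by
  have ⟨q_pos, ℓ_injective, ℓ_bound, exists_label, _⟩ := h
  induction i with
  | zero =>
    obtain ⟨x₀, hx₀⟩ := exists_label 0 1 hi le_rfl le_rfl
    refine ⟨Unit, inferInstance, inferInstance, fun _ => x₀, (),
      Function.injective_of_subsingleton _, fun x => ?_, hx₀, .point _⟩
    obtain ⟨-, hx1, hx2⟩ := ℓ_bound x
    rw [Set.range_const, Set.mem_singleton_iff, ← ℓ_injective.eq_iff, hx₀, Prod.ext_iff]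
    refine ⟨fun hx => hx.1.le, fun hx => ?_⟩
    rw [Nat.le_zero.1 hx, qbSize, if_pos rfl] at hx2
    exact ⟨Nat.le_zero.1 hx, le_antisymm hx2 hx1⟩
  | succ i ih =>
    obtain ⟨W, _, _, φ, v, hφ, hrange, hv, tower⟩ := ih (Nat.le_of_succ_le hi)
    obtain ⟨ψ, ψ_injective, hψ, hlevel⟩ := h.exists_level hi
    have fst_le (a : W) : (ℓ (φ a)).1 ≤ i := (hrange _).1 ⟨a, rfl⟩
    have fst_ne (a : W) (j) : φ a ≠ ψ j := fun heq => by
      have := fst_le a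
      rw [heq, hψ j] at this
      omega
    refine ⟨W ⊕ Fin (q (i + 1)), inferInstance, inferInstance, Sum.elim φ ψ,
      Sum.inr ⟨0, q_pos _ i.succ_pos hi⟩, hφ.sumElim ψ_injective fst_ne, fun x => ?_, hψ _, ?_⟩
    · rw [Set.Sum.elim_range, Set.mem_union, hrange, Nat.le_succ_iff]
      refine or_congr_right ⟨?_, hlevel x⟩
      rintro ⟨j, rfl⟩
      rw [hψ]
    · rw [h.comap_sumElim hφ ψ_injective fst_le hv hψ, Finset.sum_Icc_succ_top i.succ_pos,
        add_right_comm]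
      exact tower.attach _

end IsQBLabelling

lemma IsQuasiBanana.exists_isCliqueTower (h : G.IsQuasiBanana) :
    ∃ (W : Type) (_ : Fintype W) (_ : DecidableEq W) (e : W ≃ V) (n : ℕ) (v : W),
      IsCliqueTower (G.comap e) n v := by
  obtain ⟨m, q, ℓ, hℓ⟩ := h
  obtain ⟨W, _, _, φ, v, hφ, hrange, -, tower⟩ := hℓ.exists_isCliqueTower_le le_rfl
  have φ_surjective : φ.Surjective := fun x => (hrange x).2 (hℓ.2.2.1 x).1
  exact ⟨W, _, _, .ofBijective φ ⟨hφ, φ_surjective⟩, _, v, tower⟩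

end QuasiBanana

end Multigraph

/-- If `G` is a quasi-banana graph with first gonality `k` and `D` realises
the second gonality, then for every `-1 ≤ l ≤ k`, `r(l·D) = l(l+3)/2`; in particular
`(k-2)·D` is linearly equivalent to the canonical divisor. -/
theorem stmt4 (G : Multigraph V) (hG : G.Connected) (hQB : G.IsQuasiBanana)
    (k : ℕ) (hk : G.gonality 1 = (k : ℤ))
    (D : V → ℤ) (hD : G.Realises 2 D) :
    (∀ l : ℤ, -1 ≤ l → l ≤ (k : ℤ) →
      G.rank (fun w => l * D w) = l * (l + 3) / 2) ∧
    G.LinEquiv (fun w => ((k : ℤ) - 2) * D w) G.canonical := by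
  obtain ⟨W, _, _, e, n, v, tower⟩ := hQB.exists_isCliqueTower
  obtain rfl : n = k := by
    rw [← Multigraph.gonality_comap (e := e), tower.gonality_one] at hk
    exact_mod_cast hk
  have hDe : (G.comap e).Realises 2 (D ∘ e) := by
    rwa [Multigraph.Realises, Multigraph.rank_comap, Multigraph.degree_comp,
      Multigraph.gonality_comap]
  constructor
  · intro l hl hln
    rw [← Multigraph.rank_comap (e := e)]
    exact tower.rank_zsmul hDe hl hln
  · rw [← Multigraph.linEquiv_comap (e := e), ← Multigraph.canonical_comap]
    exact (tower.zsmul_linEquiv hDe (by rintro rfl; simp)).trans tower.linEquiv_canonical
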